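/- arXiv:2401.15588 — 3 statements merged into one kernel-verified Lean document; each statement's English description precedes it below -/
import Mathlib

section
/- Let α be a tempered distribution on ℝ whose Fourier transform is supported at the single point {0}. Then α, viewed as a distribution, equals a polynomial function; that is, there exist finitely many coefficients c_0,…,c_m such that α is given by integration against the polynomial x ↦ Σ c_j x^j. -/
open MeasureTheory

/-- A tempered distribution `α` vanishes on an open set `U` if it kills every Schwartz
function whose (closed) support is contained in `U`. -/
def DistVanishesOn (α : SchwartzMap ℝ ℂ →L[ℂ] ℂ) (U : Set ℝ) : Prop :=
  ∀ φ : SchwartzMap ℝ ℂ, tsupport (φ : ℝ → ℂ) ⊆ U → α φ = 0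

/-- The support of a tempered distribution: the complement of the union of the open sets
on which it vanishes. -/
def DistSupport (α : SchwartzMap ℝ ℂ →L[ℂ] ℂ) : Set ℝ :=
  {x : ℝ | ∀ U : Set ℝ, IsOpen U → x ∈ U → ¬ DistVanishesOn α U}

section Helpers

open SchwartzMap
open scoped ContDiff Manifold

/-- localisation -/
lemma vanish_of_compact (T : SchwartzMap ℝ ℂ →L[ℂ] ℂ) (h : DistSupport T ⊆ {0})
    (φ : SchwartzMap ℝ ℂ) (hc : HasCompactSupport φ) (h0 : (0:ℝ) ∉ tsupport φ) : T φ = 0 := by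
  have hx : ∀ x : tsupport φ, ∃ U : Set ℝ, IsOpen U ∧ (x:ℝ) ∈ U ∧ DistVanishesOn T U := by
    rintro ⟨x, hx⟩
    by_contra! hcon
    have : x ∈ DistSupport T := fun U hU hxU => hcon U hU hxU
    have := h this
    simp only [Set.mem_singleton_iff] at this
    exact h0 (this ▸ hx)
  choose U hUo hxU hUv using hx
  obtain ⟨t, ht⟩ := hc.isCompact.elim_finite_subcover U hUo
    (fun x hx => Set.mem_iUnion.2 ⟨⟨x, hx⟩, hxU _⟩)
  obtain ⟨ρ, hρ⟩ := SmoothPartitionOfUnity.exists_isSubordinate 𝓘(ℝ, ℝ) (isClosed_tsupport φ)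
    (fun i : t => U i) (fun i => hUo i) (by
      intro x hx
      have := ht hx
      simp only [Set.mem_iUnion] at this ⊢
      obtain ⟨i, hi, hxi⟩ := this
      exact ⟨⟨i, hi⟩, hxi⟩)
  have hsm : ∀ i : t, ContDiff ℝ ∞ (fun x => ((ρ i x : ℝ) : ℂ) * φ x) := fun i =>
    (Complex.ofRealCLM.contDiff.comp (ρ i).contMDiff.contDiff).mul (φ.smooth ⊤)
  have hcs : ∀ i : t, HasCompactSupport (fun x => ((ρ i x : ℝ) : ℂ) * φ x) := fun i =>
    hc.mul_left
  have hsum : φ = ∑ i : t, (hcs i).toSchwartzMap (hsm i) := by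
    ext x
    rw [_root_.sum_apply]
    simp only [HasCompactSupport.toSchwartzMap_toFun]
    change φ x = ∑ i : t, ((ρ i x : ℝ) : ℂ) * φ x
    by_cases hx : x ∈ tsupport φ
    · have := ρ.sum_eq_one hx
      rw [finsum_eq_sum_of_fintype] at this
      rw [← Finset.sum_mul, ← Complex.ofReal_sum, this]
      simp
    · simp [image_eq_zero_of_notMem_tsupport hx]
  rw [hsum, map_sum]
  refine Finset.sum_eq_zero fun i _ => hUv i _ ?_
  refine subset_trans ?_ (hρ i)
  refine subset_trans (tsupport_mul_subset_left (f := fun x => ((ρ i x : ℝ) : ℂ))) ?_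
  exact closure_mono (fun x hx => by simpa using hx)

lemma semi_bound (k n : ℕ) (φ : SchwartzMap ℝ ℂ) : ∃ K : ℝ, 0 ≤ K ∧ ∀ δ : ℝ, 0 ≤ δ → ∀ g : ℝ → ℂ,
    g.HasTemperateGrowth → (∀ j ≤ n, ∀ x, ‖iteratedFDeriv ℝ j g x‖ ≤ δ * (1 + ‖x‖)) →
    SchwartzMap.seminorm ℂ k n (smulLeftCLM ℂ g φ) ≤ K * δ := by
  refine ⟨∑ i ∈ Finset.range (n + 1), (n.choose i : ℝ) *
    (SchwartzMap.seminorm ℂ k (n - i) φ + SchwartzMap.seminorm ℂ (k + 1) (n - i) φ), by positivity, ?_⟩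
  intro δ hδ g hg hb
  refine seminorm_le_bound ℂ k n _ (by positivity) fun x => ?_
  rw [smulLeftCLM_apply hg]
  have := norm_iteratedFDeriv_smul_le (𝕜 := ℝ) (hg.1) (φ.smooth ⊤) x (n := n) (by exact_mod_cast le_top)
  refine (mul_le_mul_of_nonneg_left this (by positivity)).trans ?_
  rw [Finset.mul_sum, Finset.sum_mul]
  refine Finset.sum_le_sum fun i hi => ?_
  have h1 := le_seminorm ℂ k (n - i) φ x
  have h2 := le_seminorm ℂ (k + 1) (n - i) φ x
  have h3 := hb i (by simp at hi; omega) x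
  calc _ ≤ ‖x‖ ^ k * ((n.choose i : ℝ) * (δ * (1 + ‖x‖)) * ‖iteratedFDeriv ℝ (n - i) φ x‖) := by gcongr
    _ = (n.choose i : ℝ) * (‖x‖ ^ k * ‖iteratedFDeriv ℝ (n - i) φ x‖ + ‖x‖ ^ (k+1) * ‖iteratedFDeriv ℝ (n - i) φ x‖) * δ := by ring
    _ ≤ _ := by gcongr

lemma T_bound (T : SchwartzMap ℝ ℂ →L[ℂ] ℂ) : ∃ N : ℕ, ∀ φ : SchwartzMap ℝ ℂ, ∃ K : ℝ, 0 ≤ K ∧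
    ∀ δ : ℝ, 0 ≤ δ → ∀ g : ℝ → ℂ,
    g.HasTemperateGrowth → (∀ j ≤ N, ∀ x, ‖iteratedFDeriv ℝ j g x‖ ≤ δ * (1 + ‖x‖)) →
    ‖T (smulLeftCLM ℂ g φ)‖ ≤ K * δ := by
  obtain ⟨s, C, -, hC⟩ := Seminorm.bound_of_continuous (schwartz_withSeminorms ℂ ℝ ℂ)
    ((normSeminorm ℂ ℂ).comp T.toLinearMap) (by
      change Continuous fun x => ‖T x‖
      fun_prop)
  refine ⟨s.sup Prod.snd, fun φ => ?_⟩
  choose K hK0 hK using fun p : ℕ × ℕ => semi_bound p.1 p.2 φ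
  refine ⟨C * ∑ p ∈ s, K p, by have := Finset.sum_nonneg (fun p (_ : p ∈ s) => hK0 p); positivity, ?_⟩
  intro δ hδ g hg hb
  have h1 := hC (smulLeftCLM ℂ g φ)
  change ‖T (smulLeftCLM ℂ g φ)‖ ≤ C * (s.sup (schwartzSeminormFamily ℂ ℝ ℂ)) (smulLeftCLM ℂ g φ) at h1
  refine h1.trans ?_
  rw [mul_assoc]
  gcongr
  refine Seminorm.finset_sup_apply_le (mul_nonneg (Finset.sum_nonneg fun p _ => hK0 p) hδ) ?_
  intro p hp
  refine (hK p δ hδ g hg fun j hj x => hb j (hj.trans (Finset.le_sup (f := Prod.snd) hp)) x).trans ?_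
  gcongr
  exact Finset.single_le_sum (fun p _ => hK0 p) hp

lemma norm_iter_scale (j : ℕ) (g : ℝ → ℂ) (hg : ContDiff ℝ ∞ g) (c x : ℝ) :
    ‖iteratedFDeriv ℝ j (fun x => g (c * x)) x‖ = |c| ^ j * ‖iteratedFDeriv ℝ j g (c * x)‖ := by
  rw [norm_iteratedFDeriv_eq_norm_iteratedDeriv, norm_iteratedFDeriv_eq_norm_iteratedDeriv]
  have := iteratedDeriv_comp_const_smul (n := j) (hg.of_le (by exact_mod_cast le_top)) c
  rw [this]
  simp [norm_smul]

lemma bdd_iter (N : ℕ) (g : ℝ → ℂ) (hg : ContDiff ℝ ∞ g) (hc : HasCompactSupport g) :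
    ∃ C : ℝ, 0 ≤ C ∧ ∀ j ≤ N, ∀ x, ‖iteratedFDeriv ℝ j g x‖ ≤ C := by
  refine ⟨∑ j ∈ Finset.range (N + 1), SchwartzMap.seminorm ℂ 0 j (hc.toSchwartzMap hg), by positivity,
    fun j hj x => ?_⟩
  refine (norm_iteratedFDeriv_le_seminorm ℂ (hc.toSchwartzMap hg) j x).trans ?_
  exact Finset.single_le_sum (f := fun j => SchwartzMap.seminorm ℂ 0 j (hc.toSchwartzMap hg))
    (fun _ _ => by positivity) (by simp; omega)

lemma exists_bump : ∃ χ : ℝ → ℂ, ContDiff ℝ ∞ χ ∧ HasCompactSupport χ ∧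
    (∀ x, |x| ≤ 1 → χ x = 1) ∧ ∀ x, ‖1 - χ x‖ ≤ |x| := by
  let f : ContDiffBump (0:ℝ) := ⟨1, 2, by norm_num, by norm_num⟩
  have h1 : ∀ x, |x| ≤ 1 → f x = 1 := fun x hx => f.one_of_mem_closedBall (by simpa [f] using hx)
  refine ⟨fun x => (f x : ℂ), Complex.ofRealCLM.contDiff.comp f.contDiff,
    f.hasCompactSupport.comp_left (g := Complex.ofReal) (by simp), ?_, ?_⟩
  · intro x hx; simp [h1 x hx]
  · intro x
    rcases le_total |x| 1 with hx | hx
    · simp [h1 x hx]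
    · rw [← Complex.ofReal_one, ← Complex.ofReal_sub, Complex.norm_real, Real.norm_eq_abs, abs_le]
      constructor <;> linarith [f.nonneg (x := x), f.le_one (x := x)]

lemma tg_pow (M : ℕ) : (fun x : ℝ => (x : ℂ) ^ M).HasTemperateGrowth :=
  Function.HasTemperateGrowth.pow Function.Complex.hasTemperateGrowth_ofReal M

lemma mul_pow_vanish (T : SchwartzMap ℝ ℂ →L[ℂ] ℂ) (h : DistSupport T ⊆ {0}) :
    ∃ M : ℕ, ∀ φ : SchwartzMap ℝ ℂ, T (smulLeftCLM ℂ (fun x : ℝ => (x : ℂ) ^ M) φ) = 0 := by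
  obtain ⟨N, hN⟩ := T_bound T
  obtain ⟨χ, hχ, hχc, hχ1, hχb⟩ := exists_bump
  have htg := tg_pow (N + 1)
  refine ⟨N + 1, fun φ => ?_⟩
  set ψ := smulLeftCLM ℂ (fun x : ℝ => (x : ℂ) ^ (N + 1)) φ with hψ
  have hψx : ∀ x, ψ x = (x : ℂ) ^ (N + 1) * φ x := fun x => by
    rw [hψ, smulLeftCLM_apply_apply htg]; rfl
  obtain ⟨K1, hK1, hT1⟩ := hN φ
  obtain ⟨K2, hK2, hT2⟩ := hN ψ
  have hG : ContDiff ℝ ∞ (fun y : ℝ => (y : ℂ) ^ (N + 1) * χ y) := htg.1.mul hχ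
  have hGc : HasCompactSupport (fun y : ℝ => (y : ℂ) ^ (N + 1) * χ y) := hχc.mul_left
  obtain ⟨C1, hC1, hb1⟩ := bdd_iter N _ hG hGc
  obtain ⟨C2, hC2, hb2⟩ := bdd_iter N _ hχ hχc
  have key : ∀ ε : ℝ, 0 < ε → ε ≤ 1 → ‖T ψ‖ ≤ (K1 * C1 + K2 * (1 + C2)) * ε := by
    intro ε hε hε1
    have hs : ∀ c : ℝ, c ≠ 0 → ContDiff ℝ ∞ (fun x => χ (c * x)) ∧ HasCompactSupport (fun x => χ (c * x)) :=
      fun c hc => ⟨hχ.comp (contDiff_const.mul contDiff_id),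
        hχc.comp_homeomorph (Homeomorph.mulLeft₀ c hc)⟩
    obtain ⟨ha, hac⟩ := hs ε hε.ne'
    obtain ⟨hd, hdc⟩ := hs ε⁻¹ (by positivity)
    have hg1t : (fun x : ℝ => (x : ℂ) ^ (N + 1) * χ (ε⁻¹ * x)).HasTemperateGrowth :=
      htg.mul (hdc.hasTemperateGrowth hd)
    have hg2t : (fun x : ℝ => 1 - χ (ε * x)).HasTemperateGrowth :=
      (Function.HasTemperateGrowth.const 1).sub (hac.hasTemperateGrowth ha)
    have e1 := hT1 (C1 * ε) (by positivity) _ hg1t (by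
      intro j hj x
      have : (fun x : ℝ => (x : ℂ) ^ (N + 1) * χ (ε⁻¹ * x)) = fun x : ℝ =>
          (ε ^ (N + 1) : ℝ) • (fun x => (fun y : ℝ => (y : ℂ) ^ (N + 1) * χ y) (ε⁻¹ * x)) x := by
        ext x
        have : (ε : ℂ) ≠ 0 := by exact_mod_cast hε.ne'
        simp only [Complex.real_smul]
        push_cast
        rw [mul_pow, inv_pow]
        field_simp
      rw [this, iteratedFDeriv_const_smul_apply' (by
        exact ((hG.comp (contDiff_const.mul contDiff_id)).of_le (by exact_mod_cast le_top)).contDiffAt),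
        norm_smul, norm_iter_scale j _ hG]
      have h1 := hb1 j hj (ε⁻¹ * x)
      have h2 : ε ^ (N + 1) * |ε⁻¹| ^ j ≤ ε := by
        rw [abs_of_pos (by positivity), inv_pow, ← pow_sub₀ ε hε.ne' (by omega)]
        exact pow_le_of_le_one hε.le hε1 (by omega)
      have h3 : ‖(ε ^ (N + 1) : ℝ)‖ = ε ^ (N + 1) := Real.norm_of_nonneg (by positivity)
      rw [h3, ← mul_assoc]
      calc _ ≤ ε * C1 := by gcongr
        _ ≤ C1 * ε * (1 + ‖x‖) := by nlinarith [mul_nonneg (mul_nonneg hC1 hε.le) (norm_nonneg x)])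
    have e2 := hT2 ((1 + C2) * ε) (by positivity) _ hg2t (by
      intro j hj x
      rcases Nat.eq_zero_or_pos j with rfl | hj0
      · rw [norm_iteratedFDeriv_zero]
        have := hχb (ε * x)
        rw [abs_mul, abs_of_pos hε] at this
        rw [Real.norm_eq_abs]
        nlinarith [mul_nonneg hC2 hε.le, mul_nonneg (mul_nonneg hC2 hε.le) (abs_nonneg x)]
      · have h1 := hb2 j hj (ε * x)
        have h2 := norm_iter_scale j _ hχ ε x
        have h3 : ‖iteratedFDeriv ℝ j (fun x => 1 - χ (ε * x)) x‖ = ‖iteratedFDeriv ℝ j (fun x => χ (ε * x)) x‖ := by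
          rw [norm_iteratedFDeriv_eq_norm_iteratedDeriv, norm_iteratedFDeriv_eq_norm_iteratedDeriv,
            iteratedDeriv_const_sub hj0]
          simp
        rw [h3, h2, abs_of_pos hε]
        have h4 : ε ^ j ≤ ε := pow_le_of_le_one hε.le hε1 (by omega)
        calc _ ≤ ε * C2 := by gcongr
          _ ≤ _ := by nlinarith [mul_nonneg hC2 hε.le, mul_nonneg (mul_nonneg hC2 hε.le) (norm_nonneg x), mul_nonneg hε.le (norm_nonneg x)])
    have hwt : ContDiff ℝ ∞ (fun x => (χ (ε * x) - χ (ε⁻¹ * x)) * ψ x) := (ha.sub hd).mul (ψ.smooth ⊤)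
    have hwc : HasCompactSupport (fun x => (χ (ε * x) - χ (ε⁻¹ * x)) * ψ x) := (hac.sub hdc).mul_right
    have e3 := vanish_of_compact T h (hwc.toSchwartzMap hwt) hwc (by
      rw [notMem_tsupport_iff_eventuallyEq]
      have : Metric.ball (0:ℝ) ε ∈ nhds (0:ℝ) := Metric.ball_mem_nhds _ hε
      filter_upwards [this] with x hx
      simp only [Metric.mem_ball, dist_zero_right, Real.norm_eq_abs] at hx
      have h1 : χ (ε * x) = 1 := hχ1 _ (by rw [abs_mul, abs_of_pos hε]; nlinarith [abs_nonneg x])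
      have h2 : χ (ε⁻¹ * x) = 1 := hχ1 _ (by
        rw [abs_mul, abs_of_pos (by positivity), inv_mul_le_one₀ hε]; exact hx.le)
      simp [h1, h2])
    have hdec : ψ = smulLeftCLM ℂ (fun x : ℝ => (x : ℂ) ^ (N + 1) * χ (ε⁻¹ * x)) φ +
        smulLeftCLM ℂ (fun x : ℝ => 1 - χ (ε * x)) ψ + hwc.toSchwartzMap hwt := by
      ext x
      rw [_root_.add_apply, _root_.add_apply, smulLeftCLM_apply_apply hg1t, smulLeftCLM_apply_apply hg2t]
      change _ = _ + (χ (ε * x) - χ (ε⁻¹ * x)) * ψ x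
      simp only [smul_eq_mul, hψx]
      ring
    have hT : T ψ = _ := congrArg T hdec
    rw [map_add, map_add, e3, add_zero] at hT
    rw [hT]
    refine (norm_add_le _ _).trans ?_
    calc _ ≤ _ := add_le_add e1 e2
      _ = _ := by ring
  by_contra hne
  have hpos : 0 < ‖T ψ‖ := norm_pos_iff.2 hne
  set D := K1 * C1 + K2 * (1 + C2)
  have hD : 0 ≤ D := by positivity
  set ε := min 1 (‖T ψ‖ / (2 * (D + 1)))
  have hε : 0 < ε := by positivity
  have h1 := key ε hε (min_le_left _ _)
  have h2 : ε ≤ ‖T ψ‖ / (2 * (D + 1)) := min_le_right _ _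
  rw [le_div_iff₀ (by positivity)] at h2
  nlinarith

lemma poly_tg (P : Polynomial ℂ) : (fun x : ℝ => P.eval (x : ℂ)).HasTemperateGrowth := by
  induction P using Polynomial.induction_on' with
  | add p q hp hq =>
    simp only [Polynomial.eval_add]
    exact hp.add hq
  | monomial n a =>
    simp only [Polynomial.eval_monomial]
    exact (Function.HasTemperateGrowth.const (E := ℝ) a).mul
      (Function.HasTemperateGrowth.pow Function.Complex.hasTemperateGrowth_ofReal n)

lemma poly_int (P : Polynomial ℂ) (φ : SchwartzMap ℝ ℂ) :
    Integrable (fun x : ℝ => P.eval (x : ℂ) * φ x) := by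
  have := (smulLeftCLM ℂ (fun x : ℝ => P.eval (x : ℂ)) φ).integrable (μ := volume)
  rwa [smulLeftCLM_apply (poly_tg P)] at this

lemma poly_parts (Q : Polynomial ℂ) (ψ : SchwartzMap ℝ ℂ) :
    ∫ x : ℝ, Q.eval (x : ℂ) * derivCLM ℂ ℂ ψ x = - ∫ x : ℝ, Q.derivative.eval (x : ℂ) * ψ x := by
  have h := integral_mul_deriv_eq_deriv_mul_of_integrable (u := fun x : ℝ => Q.eval (x : ℂ))
    (v := ψ) (u' := fun x : ℝ => Q.derivative.eval (x : ℂ)) (v' := derivCLM ℂ ℂ ψ)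
    (fun x _ => (Q.hasDerivAt (x : ℂ)).comp_ofReal) (fun x _ => ψ.hasDerivAt x)
    (poly_int Q _) (poly_int Q.derivative ψ) (poly_int Q ψ)
  exact h

lemma poly_antideriv (P : Polynomial ℂ) : ∃ Q : Polynomial ℂ, Q.derivative = P := by
  induction P using Polynomial.induction_on' with
  | add p q hp hq =>
    obtain ⟨a, rfl⟩ := hp
    obtain ⟨b, rfl⟩ := hq
    exact ⟨a + b, by simp⟩
  | monomial n a =>
    refine ⟨Polynomial.monomial (n + 1) (a / (n + 1)), ?_⟩
    rw [Polynomial.derivative_monomial]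
    have : (n : ℂ) + 1 ≠ 0 := by exact_mod_cast n.succ_ne_zero
    simp [this]

/-- A Schwartz function of integral zero is the derivative of a Schwartz function. -/
lemma exists_primitive (φ : SchwartzMap ℝ ℂ) (h : ∫ x, φ x = 0) :
    ∃ ψ : SchwartzMap ℝ ℂ, derivCLM ℂ ℂ ψ = φ := by
  have hi : Integrable φ := φ.integrable
  let F : ℝ → ℂ := fun x => ∫ t in Set.Iic x, φ t
  have hF : ∀ x, HasDerivAt F (φ x) x := by
    intro x
    have h1 : F = fun x => (∫ t in Set.Iic 0, φ t) + ∫ t in (0:ℝ)..x, φ t := by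
      ext y
      rw [← intervalIntegral.integral_Iic_sub_Iic hi.integrableOn hi.integrableOn]
      simp [F]
    rw [h1]
    exact (intervalIntegral.integral_hasDerivAt_right (hi.intervalIntegrable)
      (φ.continuous.stronglyMeasurableAtFilter _ _) φ.continuous.continuousAt).const_add _
  have hd : deriv F = φ := funext fun x => (hF x).deriv
  have hsm : ContDiff ℝ ∞ F := by
    rw [contDiff_infty_iff_deriv]
    exact ⟨fun x => (hF x).differentiableAt, hd ▸ φ.smooth ⊤⟩
  have hFneg : ∀ x, F x = - ∫ t in Set.Ioi x, φ t := by
    intro x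
    have := integral_add_compl (s := Set.Iic x) measurableSet_Iic hi
    rw [h, Set.compl_Iic] at this
    exact eq_neg_of_add_eq_zero_left this
  have hdec : ∀ k x, ‖x‖ ^ k * ‖F x‖ ≤ ∫ t, ‖t‖ ^ k * ‖φ t‖ := by
    intro k x
    have hik : Integrable (fun t => ‖t‖ ^ k * ‖φ t‖) := φ.integrable_pow_mul volume k
    have main : ∀ s : Set ℝ, MeasurableSet s → (∀ t ∈ s, ‖x‖ ≤ ‖t‖) →
        ‖x‖ ^ k * ‖∫ t in s, φ t‖ ≤ ∫ t, ‖t‖ ^ k * ‖φ t‖ := by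
      intro s hs hst
      calc ‖x‖ ^ k * ‖∫ t in s, φ t‖ ≤ ‖x‖ ^ k * ∫ t in s, ‖φ t‖ := by
            gcongr; exact norm_integral_le_integral_norm _
        _ = ∫ t in s, ‖x‖ ^ k * ‖φ t‖ := by rw [integral_const_mul]
        _ ≤ ∫ t in s, ‖t‖ ^ k * ‖φ t‖ := by
            refine setIntegral_mono_on (hi.norm.const_mul _).integrableOn hik.integrableOn hs ?_
            intro t ht
            have := hst t ht
            gcongr
        _ ≤ _ := setIntegral_le_integral hik (Filter.Eventually.of_forall fun t => by positivity)
    rcases le_total x 0 with hx | hx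
    · refine main (Set.Iic x) measurableSet_Iic fun t ht => ?_
      simp only [Set.mem_Iic] at ht
      rw [Real.norm_eq_abs, Real.norm_eq_abs, abs_of_nonpos hx, abs_of_nonpos (ht.trans hx)]
      linarith
    · rw [hFneg, norm_neg]
      refine main (Set.Ioi x) measurableSet_Ioi fun t ht => ?_
      simp only [Set.mem_Ioi] at ht
      rw [Real.norm_eq_abs, Real.norm_eq_abs, abs_of_nonneg hx, abs_of_nonneg (hx.trans ht.le)]
      exact ht.le
  refine ⟨⟨F, hsm, ?_⟩, ?_⟩
  · intro k n
    cases n with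
    | zero => exact ⟨_, fun x => by simpa using hdec k x⟩
    | succ n =>
      refine ⟨SchwartzMap.seminorm ℂ k n φ, fun x => ?_⟩
      rw [norm_iteratedFDeriv_eq_norm_iteratedDeriv, iteratedDeriv_succ', hd,
        ← norm_iteratedFDeriv_eq_norm_iteratedDeriv]
      exact le_seminorm ℂ k n φ x
  · ext x
    rw [derivCLM_apply]
    exact (hF x).deriv

lemma poly_of_iter (φ₀ : SchwartzMap ℝ ℂ) (h₀ : ∫ x, φ₀ x = 1) (M : ℕ) :
    ∀ α : SchwartzMap ℝ ℂ →ₗ[ℂ] ℂ, (∀ ψ, α (((derivCLM ℂ ℂ : SchwartzMap ℝ ℂ →L[ℂ] SchwartzMap ℝ ℂ))^[M] ψ) = 0) →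
    ∃ P : Polynomial ℂ, ∀ φ : SchwartzMap ℝ ℂ, α φ = ∫ x : ℝ, P.eval (x : ℂ) * φ x := by
  induction M with
  | zero => exact fun α h => ⟨0, fun φ => by simpa using h φ⟩
  | succ M ih =>
    intro α h
    obtain ⟨P, hP⟩ := ih (α.comp (derivCLM ℂ ℂ).toLinearMap) (fun ψ => by
      have := h ψ
      rwa [Function.iterate_succ_apply'] at this)
    obtain ⟨Q, hQ⟩ := poly_antideriv (-P)
    refine ⟨Q + Polynomial.C (α φ₀ - ∫ x : ℝ, Q.eval (x : ℂ) * φ₀ x), fun φ => ?_⟩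
    set c := α φ₀ - ∫ x : ℝ, Q.eval (x : ℂ) * φ₀ x with hc
    obtain ⟨ψ, hψ⟩ := exists_primitive (φ - (∫ x, φ x) • φ₀) (by
      have : ∀ x, (φ - (∫ x, φ x) • φ₀) x = φ x - (∫ x, φ x) * φ₀ x := fun x => rfl
      simp_rw [this]
      rw [integral_sub φ.integrable (φ₀.integrable.const_mul _), integral_const_mul, h₀]
      simp)
    have h1 : α (derivCLM ℂ ℂ ψ) = ∫ x : ℝ, Q.eval (x : ℂ) * derivCLM ℂ ℂ ψ x := by
      rw [poly_parts, hQ]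
      have := hP ψ
      simp only [Polynomial.eval_neg, neg_mul, integral_neg, neg_neg]
      exact this
    rw [hψ, map_sub, map_smul] at h1
    have h2 : ∀ x : ℝ, Q.eval (x : ℂ) * (φ - (∫ x, φ x) • φ₀) x =
      Q.eval (x : ℂ) * φ x - (∫ x, φ x) * (Q.eval (x : ℂ) * φ₀ x) := fun x => by
        change Q.eval (x : ℂ) * (φ x - (∫ x, φ x) * φ₀ x) = _
        ring
    simp_rw [h2] at h1
    rw [integral_sub (poly_int Q φ) ((poly_int Q φ₀).const_mul _), integral_const_mul] at h1
    simp only [Polynomial.eval_add, Polynomial.eval_C, add_mul]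
    rw [integral_add (poly_int Q φ) (φ.integrable.const_mul _), integral_const_mul, hc]
    simp only [smul_eq_mul] at h1
    linear_combination h1

lemma exists_unit : ∃ φ₀ : SchwartzMap ℝ ℂ, ∫ x, φ₀ x = 1 := by
  let f : ContDiffBump (0:ℝ) := ⟨1, 2, by norm_num, by norm_num⟩
  have hs : ContDiff ℝ ∞ (fun x => (f.normed volume x : ℂ)) :=
    Complex.ofRealCLM.contDiff.comp f.contDiff_normed
  have hc : HasCompactSupport (fun x => (f.normed volume x : ℂ)) :=
    f.hasCompactSupport_normed.comp_left (g := Complex.ofReal) (by simp)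
  refine ⟨hc.toSchwartzMap hs, ?_⟩
  change ∫ x, (f.normed volume x : ℂ) = 1
  rw [integral_complex_ofReal, f.integral_normed]
  simp

open FourierTransform LineDeriv in
lemma deriv_fourier (f : SchwartzMap ℝ ℂ) : derivCLM ℂ ℂ (fourierTransformCLM ℂ f) =
    fourierTransformCLM ℂ (-(2 * Real.pi * Complex.I) • smulLeftCLM ℂ (fun x : ℝ => (x : ℂ)) f) := by
  have := lineDerivOp_fourier_eq f (1 : ℝ)
  have e : smulLeftCLM ℂ (inner ℝ · (1:ℝ)) f = smulLeftCLM ℂ (fun x : ℝ => (x : ℂ)) f := by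
    ext x
    rw [smulLeftCLM_apply_apply (by fun_prop), smulLeftCLM_apply_apply Function.Complex.hasTemperateGrowth_ofReal]
    simp
  rw [e] at this
  exact this

open FourierTransform in
lemma deriv_iter_fourier (M : ℕ) (f : SchwartzMap ℝ ℂ) :
    (derivCLM ℂ ℂ : SchwartzMap ℝ ℂ →L[ℂ] SchwartzMap ℝ ℂ)^[M] (fourierTransformCLM ℂ f) =
    fourierTransformCLM ℂ ((-(2 * Real.pi * Complex.I)) ^ M •
      smulLeftCLM ℂ (fun x : ℝ => (x : ℂ) ^ M) f) := by
  induction M with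
  | zero =>
    simp only [Function.iterate_zero, id, pow_zero, one_smul]
    congr 1
    simp
  | succ M ih =>
    rw [Function.iterate_succ_apply', ih, deriv_fourier, map_smul (smulLeftCLM ℂ _), smul_smul]
    rw [smulLeftCLM_smulLeftCLM_apply (g₁ := fun x : ℝ => (x : ℂ))
      Function.Complex.hasTemperateGrowth_ofReal (tg_pow M)]
    congr 2
    · ring
    · congr 2
      ext x
      simp [pow_succ']

end Helpers

/-- If the Fourier transform of a tempered distribution `α` on `ℝ` is supported at the
single point `{0}`, then `α` is given by integration against a polynomial. -/
theorem tempered_distribution_fourier_supported_at_zero_is_polynomial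
    (α : SchwartzMap ℝ ℂ →L[ℂ] ℂ)
    (h : DistSupport (α.comp ((SchwartzMap.fourierTransformCLM ℂ : SchwartzMap ℝ ℂ →L[ℂ] SchwartzMap ℝ ℂ))) ⊆ {0}) :
    ∃ P : Polynomial ℂ, ∀ φ : SchwartzMap ℝ ℂ,
      α φ = ∫ x : ℝ, P.eval (x : ℂ) * φ x := by
  obtain ⟨M, hM⟩ := mul_pow_vanish _ h
  obtain ⟨φ₀, h₀⟩ := exists_unit
  refine poly_of_iter φ₀ h₀ M α.toLinearMap fun ψ => ?_
  obtain ⟨f, rfl⟩ : ∃ f, SchwartzMap.fourierTransformCLM ℂ f = ψ :=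
    ⟨FourierTransform.fourierInv ψ, by
      rw [SchwartzMap.fourierTransformCLM_apply]
      exact FourierTransform.fourier_fourierInv_eq ψ⟩
  rw [deriv_iter_fourier, map_smul]
  have := hM f
  simp only [ContinuousLinearMap.comp_apply] at this
  change α _ = 0
  rw [map_smul, this, smul_zero]
end

section
/- A tempered distribution on ℝ supported at the origin is a finite linear combination of derivatives of the Dirac delta measure at 0. -/
open scoped ContDiff Manifold in
/-- Vanishing on compactly supported functions away from the origin. -/
lemma dsa_compact (α : SchwartzMap ℝ ℂ →L[ℂ] ℂ) (h : DistSupport α ⊆ {0})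
    (φ : SchwartzMap ℝ ℂ) (hc : HasCompactSupport (φ : ℝ → ℂ))
    (h0 : (0 : ℝ) ∉ tsupport (φ : ℝ → ℂ)) : α φ = 0 := by
  have hU : ∀ x : tsupport (φ : ℝ → ℂ), ∃ U : Set ℝ, IsOpen U ∧ (x : ℝ) ∈ U ∧
      DistVanishesOn α U := by
    intro x
    by_contra hcon
    push Not at hcon
    have hx : (x : ℝ) ∈ DistSupport α := fun U hU hx => hcon U hU hx
    have := h hx
    simp only [Set.mem_singleton_iff] at this
    exact h0 (this ▸ x.2)
  choose U hUo hxU hUv using hU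
  obtain ⟨ρ, hρ⟩ := SmoothPartitionOfUnity.exists_isSubordinate 𝓘(ℝ, ℝ)
    (s := tsupport (φ : ℝ → ℂ)) (isClosed_tsupport _) U hUo
    (fun x hx => Set.mem_iUnion.2 ⟨⟨x, hx⟩, hxU ⟨x, hx⟩⟩)
  have hfin := ρ.locallyFinite.finite_nonempty_inter_compact hc
  have hsm : ∀ i, ContDiff ℝ ∞ (fun x => (ρ i x : ℂ) * φ x) := by
    intro i
    have h1 : ContDiff ℝ ∞ (ρ i) := (ρ i).contMDiff.contDiff
    exact (Complex.ofRealCLM.contDiff.comp h1).mul (φ.smooth ⊤)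
  have hcs : ∀ i, HasCompactSupport (fun x => (ρ i x : ℂ) * φ x) := fun i => hc.mul_left
  let f : tsupport (φ : ℝ → ℂ) → SchwartzMap ℝ ℂ := fun i => (hcs i).toSchwartzMap (hsm i)
  have hf : ∀ i x, f i x = (ρ i x : ℂ) * φ x := fun i x => rfl
  have hα : ∀ i, α (f i) = 0 := by
    intro i
    apply hUv i
    refine subset_trans ?_ (hρ i)
    apply closure_mono
    intro x hx
    simp only [Function.mem_support, hf] at hx ⊢
    intro h; simp [h] at hx
  have hsum : φ = ∑ i ∈ hfin.toFinset, f i := by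
    ext x
    rw [FunLike.coe_sum, Finset.sum_apply]
    simp only [hf]
    rw [← Finset.sum_mul]
    by_cases hx : x ∈ tsupport (φ : ℝ → ℂ)
    · have h1 : ∑ i ∈ hfin.toFinset, ρ i x = 1 := by
        apply ρ.sum_finsupport' x hx
        intro i hi
        simp only [SmoothPartitionOfUnity.mem_finsupport] at hi
        simp only [Set.Finite.mem_toFinset]
        exact ⟨x, hi, hx⟩
      rw [← Complex.ofReal_sum, h1]; simp
    · simp [image_eq_zero_of_notMem_tsupport hx]
  rw [hsum, map_sum]
  exact Finset.sum_eq_zero fun i _ => hα i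

open scoped ContDiff in
/-- A fixed real smooth cutoff. -/
lemma dsa_exists_real_cutoff : ∃ g : ℝ → ℝ, ContDiff ℝ ∞ g ∧ HasCompactSupport g ∧
    (∀ x, |x| ≤ 1 → g x = 1) ∧ (∀ x, 2 ≤ |x| → g x = 0) := by
  obtain ⟨b, hb1, hb2⟩ : ∃ b : ContDiffBump (0 : ℝ), b.rIn = 1 ∧ b.rOut = 2 :=
    ⟨⟨1, 2, by norm_num, by norm_num⟩, rfl, rfl⟩
  refine ⟨b, b.contDiff, b.hasCompactSupport, fun x hx => ?_, fun x hx => ?_⟩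
  · exact b.one_of_mem_closedBall
      (mem_closedBall_zero_iff.2 (by rw [Real.norm_eq_abs, hb1]; exact hx))
  · exact b.zero_of_le_dist (by rw [dist_zero_right, Real.norm_eq_abs, hb2]; exact hx)

open scoped ContDiff in
/-- A fixed smooth cutoff. -/
lemma dsa_exists_cutoff : ∃ ψ : SchwartzMap ℝ ℂ, (∀ x, |x| ≤ 1 → ψ x = 1) ∧
    (∀ x, 2 ≤ |x| → ψ x = 0) := by
  obtain ⟨g, hg, hgc, hg1, hg2⟩ := dsa_exists_real_cutoff
  have hsm : ContDiff ℝ ∞ (fun x => (g x : ℂ)) := Complex.ofRealCLM.contDiff.comp hg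
  have hcs : HasCompactSupport (fun x => (g x : ℂ)) :=
    hgc.comp_left (g := fun y : ℝ => (y : ℂ)) Complex.ofReal_zero
  refine ⟨hcs.toSchwartzMap hsm, fun x hx => ?_, fun x hx => ?_⟩
  · change (g x : ℂ) = 1
    rw [hg1 x hx, Complex.ofReal_one]
  · change (g x : ℂ) = 0
    rw [hg2 x hx, Complex.ofReal_zero]

/-- Multiplication by the rescaled cutoff. -/
noncomputable def dsaCut (ψ : SchwartzMap ℝ ℂ) (c : ℝ) (φ : SchwartzMap ℝ ℂ) : SchwartzMap ℝ ℂ :=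
  SchwartzMap.smulLeftCLM ℂ (fun x : ℝ => ψ (c * x)) φ

lemma dsaCut_apply (ψ : SchwartzMap ℝ ℂ) (c : ℝ) (φ : SchwartzMap ℝ ℂ) :
    (dsaCut ψ c φ : ℝ → ℂ) = (fun x => ψ (c * x)) * (φ : ℝ → ℂ) := by
  have hg : Function.HasTemperateGrowth (fun x : ℝ => ψ (c * x)) := by
    have h1 : Function.HasTemperateGrowth (fun x : ℝ => c * x) := by fun_prop
    exact ψ.hasTemperateGrowth.comp h1
  rw [dsaCut, SchwartzMap.smulLeftCLM_apply hg]
  rfl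

lemma dsaCut_bound (ψ : SchwartzMap ℝ ℂ) (c : ℝ) (hc : 0 ≤ c) (φ : SchwartzMap ℝ ℂ) (n : ℕ)
    (x : ℝ) : ‖iteratedDeriv n (dsaCut ψ c φ : ℝ → ℂ) x‖ ≤
      ∑ i ∈ Finset.range (n + 1), (n.choose i : ℝ) * SchwartzMap.seminorm ℂ 0 i ψ *
        (c ^ i * ‖iteratedDeriv (n - i) (φ : ℝ → ℂ) x‖) := by
  have hs : ContDiff ℝ n (fun x => ψ (c * x)) := (ψ.smooth n).comp (by fun_prop)
  rw [dsaCut_apply, iteratedDeriv_mul hs.contDiffAt (φ.smooth n).contDiffAt]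
  refine (norm_sum_le _ _).trans (Finset.sum_le_sum fun i _ => ?_)
  rw [iteratedDeriv_comp_const_smul (ψ.smooth i) c]
  have h1 := ψ.le_seminorm' ℂ 0 i (c * x)
  simp only [pow_zero, one_mul] at h1
  simp only [norm_mul, norm_smul, norm_pow, Real.norm_eq_abs, abs_of_nonneg hc, Complex.norm_natCast]
  calc (n.choose i : ℝ) * (c ^ i * ‖iteratedDeriv i (ψ : ℝ → ℂ) (c * x)‖) *
        ‖iteratedDeriv (n - i) (φ : ℝ → ℂ) x‖
      ≤ (n.choose i : ℝ) * (c ^ i * SchwartzMap.seminorm ℂ 0 i ψ) *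
        ‖iteratedDeriv (n - i) (φ : ℝ → ℂ) x‖ := by gcongr
    _ = _ := by ring

/-- Continuity of `α` as a bound. -/
lemma dsa_order (α : SchwartzMap ℝ ℂ →L[ℂ] ℂ) : ∃ (s : Finset (ℕ × ℕ)) (C : ℝ), 0 ≤ C ∧
    ∀ f, ‖α f‖ ≤ C * s.sup (schwartzSeminormFamily ℂ ℝ ℂ) f := by
  obtain ⟨s, C, -, hC⟩ := Seminorm.bound_of_continuous (schwartz_withSeminorms ℂ ℝ ℂ)
    ((normSeminorm ℂ ℂ).comp α.toLinearMap) (by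
      exact continuous_norm.comp α.continuous)
  exact ⟨s, C, C.2, fun f => hC f⟩

/-- Limiting argument. -/
lemma dsa_limit (α : SchwartzMap ℝ ℂ →L[ℂ] ℂ) (s : Finset (ℕ × ℕ)) (C : ℝ) (hC0 : 0 ≤ C)
    (hC : ∀ f, ‖α f‖ ≤ C * s.sup (schwartzSeminormFamily ℂ ℝ ℂ) f)
    (φ : SchwartzMap ℝ ℂ) (F : ℝ → SchwartzMap ℝ ℂ)
    (hF : ∀ t, 0 < t → t ≤ 1 → α (F t) = α φ)
    (hB : ∀ p ∈ s, ∃ B : ℝ, ∀ t, 0 < t → t ≤ 1 → ∀ x,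
      |x| ^ p.1 * ‖iteratedDeriv p.2 (F t : ℝ → ℂ) x‖ ≤ B * t) : α φ = 0 := by
  choose! B hB using hB
  have key : ∀ t, 0 < t → t ≤ 1 → ‖α φ‖ ≤ C * (∑ p ∈ s, |B p|) * t := by
    intro t ht ht1
    rw [← hF t ht ht1]
    refine (hC _).trans ?_
    rw [mul_assoc]
    gcongr
    have hS : 0 ≤ ∑ p ∈ s, |B p| := Finset.sum_nonneg fun _ _ => abs_nonneg _
    refine Seminorm.finset_sup_apply_le (by positivity) fun p hp => ?_
    change SchwartzMap.seminorm ℂ p.1 p.2 (F t) ≤ _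
    refine SchwartzMap.seminorm_le_bound' ℂ _ _ _ (by positivity) fun x => ?_
    refine (hB p hp t ht ht1 x).trans ?_
    gcongr
    exact (le_abs_self _).trans
      (Finset.single_le_sum (f := fun p => |B p|) (fun _ _ => abs_nonneg _) hp)
  have hlim : Filter.Tendsto (fun t : ℝ => C * (∑ p ∈ s, |B p|) * t) (nhdsWithin 0 (Set.Ioi 0))
      (nhds 0) := by
    have : Continuous (fun t : ℝ => C * (∑ p ∈ s, |B p|) * t) := by fun_prop
    simpa using (this.tendsto 0).mono_left nhdsWithin_le_nhds
  have : ‖α φ‖ ≤ 0 := by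
    refine ge_of_tendsto hlim ?_
    filter_upwards [Ioc_mem_nhdsGT (zero_lt_one (α := ℝ))] with t ht
    exact key t ht.1 ht.2
  simpa using this

/-- Vanishing on Schwartz functions whose support avoids the origin. -/
lemma dsa_away (α : SchwartzMap ℝ ℂ →L[ℂ] ℂ) (h : DistSupport α ⊆ {0})
    (φ : SchwartzMap ℝ ℂ) (h0 : (0 : ℝ) ∉ tsupport (φ : ℝ → ℂ)) : α φ = 0 := by
  obtain ⟨ψ, hψ1, hψ2⟩ := dsa_exists_cutoff
  obtain ⟨s, C, hC0, hC⟩ := dsa_order α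
  refine dsa_limit α s C hC0 hC φ (fun t => φ - dsaCut ψ t φ) ?_ ?_
  · intro t ht ht1
    rw [map_sub, sub_eq_self]
    apply dsa_compact α h
    · refine HasCompactSupport.of_support_subset_isCompact (isCompact_closedBall 0 (2 / t)) ?_
      intro x hx
      by_contra hx2
      apply hx
      simp only [Metric.mem_closedBall, dist_zero_right, Real.norm_eq_abs, not_le] at hx2
      have : 2 ≤ |t * x| := by
        rw [abs_mul, abs_of_pos ht]
        rw [div_lt_iff₀ ht] at hx2
        linarith
      simp [dsaCut_apply, hψ2 _ this]
    · exact fun hx => h0 (tsupport_mul_subset_right (by rw [dsaCut_apply] at hx; exact hx))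
  · rintro ⟨k, n⟩ -
    refine ⟨SchwartzMap.seminorm ℂ (k + 1) n φ + ∑ i ∈ Finset.range (n + 1),
      (n.choose i : ℝ) * SchwartzMap.seminorm ℂ 0 i ψ *
        SchwartzMap.seminorm ℂ (k + 1) (n - i) φ, fun t ht ht1 x => ?_⟩
    dsimp only
    rcases lt_or_ge |t * x| 1 with hx | hx
    · have hev : ((φ - dsaCut ψ t φ : SchwartzMap ℝ ℂ) : ℝ → ℂ) =ᶠ[nhds x] fun _ => 0 := by
        have : ∀ᶠ y in nhds x, |t * y| < 1 :=
          (by fun_prop : Continuous fun y : ℝ => |t * y|).continuousAt.eventually_lt_const hx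
        filter_upwards [this] with y hy
        simp [dsaCut_apply, hψ1 _ hy.le]
      rw [hev.iteratedDeriv_eq]
      have : 0 ≤ ∑ i ∈ Finset.range (n + 1),
        (n.choose i : ℝ) * SchwartzMap.seminorm ℂ 0 i ψ *
          SchwartzMap.seminorm ℂ (k + 1) (n - i) φ := Finset.sum_nonneg fun i _ => by positivity
      have : iteratedDeriv n (fun _ : ℝ => (0 : ℂ)) x = 0 := by simp
      rw [this]
      simp only [norm_zero, mul_zero]
      positivity
    · rw [abs_mul, abs_of_pos ht] at hx
      have hsub : ‖iteratedDeriv n ((φ - dsaCut ψ t φ : SchwartzMap ℝ ℂ) : ℝ → ℂ) x‖ ≤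
          ‖iteratedDeriv n (φ : ℝ → ℂ) x‖ + ‖iteratedDeriv n (dsaCut ψ t φ : ℝ → ℂ) x‖ := by
        rw [FunLike.coe_sub, iteratedDeriv_sub (φ.smooth n).contDiffAt
          ((dsaCut ψ t φ).smooth n).contDiffAt]
        exact norm_sub_le _ _
      have hcut := dsaCut_bound ψ t ht.le φ n x
      calc |x| ^ k * ‖iteratedDeriv n ((φ - dsaCut ψ t φ : SchwartzMap ℝ ℂ) : ℝ → ℂ) x‖
          ≤ (|x| ^ k * ‖iteratedDeriv n ((φ - dsaCut ψ t φ : SchwartzMap ℝ ℂ) : ℝ → ℂ) x‖) *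
              (t * |x|) := le_mul_of_one_le_right (by positivity) hx
        _ = |x| ^ (k + 1) * ‖iteratedDeriv n ((φ - dsaCut ψ t φ : SchwartzMap ℝ ℂ) : ℝ → ℂ) x‖
              * t := by ring
        _ ≤ |x| ^ (k + 1) * (‖iteratedDeriv n (φ : ℝ → ℂ) x‖ +
              ∑ i ∈ Finset.range (n + 1), (n.choose i : ℝ) * SchwartzMap.seminorm ℂ 0 i ψ *
              (t ^ i * ‖iteratedDeriv (n - i) (φ : ℝ → ℂ) x‖)) * t := by
            gcongr
            exact hsub.trans (by gcongr)
        _ ≤ _ := by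
            gcongr
            rw [mul_add, Finset.mul_sum]
            refine add_le_add (φ.le_seminorm' ℂ (k + 1) n x) (Finset.sum_le_sum fun i hi => ?_)
            · have h1 := φ.le_seminorm' ℂ (k + 1) (n - i) x
              have h2 : t ^ i ≤ 1 := pow_le_one₀ ht.le ht1
              calc |x| ^ (k + 1) * ((n.choose i : ℝ) * SchwartzMap.seminorm ℂ 0 i ψ *
                    (t ^ i * ‖iteratedDeriv (n - i) (φ : ℝ → ℂ) x‖))
                  = (n.choose i : ℝ) * SchwartzMap.seminorm ℂ 0 i ψ *
                    (t ^ i * (|x| ^ (k + 1) * ‖iteratedDeriv (n - i) (φ : ℝ → ℂ) x‖)) := by ring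
                _ ≤ (n.choose i : ℝ) * SchwartzMap.seminorm ℂ 0 i ψ *
                    (1 * SchwartzMap.seminorm ℂ (k + 1) (n - i) φ) := by gcongr
                _ = _ := by rw [one_mul]

/-- Taylor-type estimate for functions vanishing to order `N` at the origin. -/
lemma dsa_taylor (φ : SchwartzMap ℝ ℂ) (N : ℕ)
    (hφ : ∀ j ≤ N, iteratedDeriv j (φ : ℝ → ℂ) 0 = 0) :
    ∃ M : ℝ, 0 ≤ M ∧ ∀ p ≤ N + 1, ∀ x, ‖iteratedDeriv (N + 1 - p) (φ : ℝ → ℂ) x‖ ≤ M * |x| ^ p := by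
  refine ⟨SchwartzMap.seminorm ℂ 0 (N + 1) φ, by positivity, fun p => ?_⟩
  induction p with
  | zero => intro _ x; simpa using φ.le_seminorm' ℂ 0 (N + 1) x
  | succ p ih =>
    intro hp x
    have ih := ih (by omega)
    set j := N + 1 - (p + 1) with hj
    have hj1 : N + 1 - p = j + 1 := by omega
    rw [hj1] at ih
    have hd : Differentiable ℝ (iteratedDeriv j (φ : ℝ → ℂ)) :=
      (φ.smooth ⊤).differentiable_iteratedDeriv j (by exact_mod_cast WithTop.coe_lt_top _)
    have h1 := Convex.norm_image_sub_le_of_norm_deriv_le (𝕜 := ℝ)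
      (f := iteratedDeriv j (φ : ℝ → ℂ)) (s := Metric.closedBall 0 |x|) (x := 0) (y := x)
      (C := SchwartzMap.seminorm ℂ 0 (N + 1) φ * |x| ^ p) (fun y _ => hd y) (fun y hy => by
        rw [← iteratedDeriv_succ]
        refine (ih y).trans ?_
        have : |y| ≤ |x| := by simpa using hy
        gcongr) (convex_closedBall _ _) (by simp) (by simp)
    rw [hφ j (by omega), sub_zero, sub_zero, Real.norm_eq_abs] at h1
    rw [pow_succ, ← mul_assoc]
    exact h1

/-- Vanishing on functions which vanish to high order at the origin. -/
lemma dsa_flat (α : SchwartzMap ℝ ℂ →L[ℂ] ℂ) (h : DistSupport α ⊆ {0}) : ∃ N : ℕ,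
    ∀ φ : SchwartzMap ℝ ℂ, (∀ j ≤ N, iteratedDeriv j (φ : ℝ → ℂ) 0 = 0) → α φ = 0 := by
  obtain ⟨ψ, hψ1, hψ2⟩ := dsa_exists_cutoff
  obtain ⟨s, C, hC0, hC⟩ := dsa_order α
  refine ⟨s.sup Prod.snd, fun φ hφ => ?_⟩
  obtain ⟨M, hM0, hM⟩ := dsa_taylor φ _ hφ
  refine dsa_limit α s C hC0 hC φ (fun t => dsaCut ψ t⁻¹ φ) ?_ ?_
  · intro t ht ht1
    have : α (φ - dsaCut ψ t⁻¹ φ) = 0 := by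
      apply dsa_away α h
      rw [notMem_tsupport_iff_eventuallyEq]
      have : ∀ᶠ y in nhds (0 : ℝ), |t⁻¹ * y| < 1 :=
        (by fun_prop : Continuous fun y : ℝ => |t⁻¹ * y|).continuousAt.eventually_lt_const
          (by simp)
      filter_upwards [this] with y hy
      simp [dsaCut_apply, hψ1 _ hy.le]
    rw [map_sub, sub_eq_zero] at this
    exact this.symm
  · rintro ⟨k, n⟩ hp
    have hn : n ≤ s.sup Prod.snd := Finset.le_sup (f := Prod.snd) hp
    generalize s.sup Prod.snd = N at *
    refine ⟨2 ^ k * ∑ i ∈ Finset.range (n + 1),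
      (n.choose i : ℝ) * SchwartzMap.seminorm ℂ 0 i ψ * (M * 2 ^ (N + 1 - n + i)),
      fun t ht ht1 x => ?_⟩
    dsimp only
    rcases lt_or_ge 2 |t⁻¹ * x| with hx | hx
    · have hev : (dsaCut ψ t⁻¹ φ : ℝ → ℂ) =ᶠ[nhds x] fun _ => 0 := by
        have : ∀ᶠ y in nhds x, 2 < |t⁻¹ * y| :=
          (by fun_prop : Continuous fun y : ℝ => |t⁻¹ * y|).continuousAt.eventually_const_lt hx
        filter_upwards [this] with y hy
        simp [dsaCut_apply, hψ2 _ hy.le]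
      rw [hev.iteratedDeriv_eq]
      have : 0 ≤ ∑ i ∈ Finset.range (n + 1),
        (n.choose i : ℝ) * SchwartzMap.seminorm ℂ 0 i ψ * (M * 2 ^ (N + 1 - n + i)) :=
        Finset.sum_nonneg fun i _ => by positivity
      have : iteratedDeriv n (fun _ : ℝ => (0 : ℂ)) x = 0 := by simp
      rw [this]
      simp only [norm_zero, mul_zero]
      positivity
    · rw [abs_mul, abs_of_pos (inv_pos.2 ht), inv_mul_le_iff₀ ht] at hx
      rw [mul_assoc, Finset.sum_mul]
      have hx2 : |x| ≤ 2 := hx.trans (by linarith)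
      gcongr
      refine (dsaCut_bound ψ t⁻¹ (inv_pos.2 ht).le φ n x).trans ?_
      refine Finset.sum_le_sum fun i hi => ?_
      rw [mul_assoc _ (M * _) t]
      refine mul_le_mul_of_nonneg_left ?_ (by positivity)
      have hi' : i ≤ n := by simpa [Nat.lt_succ_iff] using hi
      have h1 := hM (N + 1 - n + i) (by omega) x
      rw [show N + 1 - (N + 1 - n + i) = n - i by omega] at h1
      calc t⁻¹ ^ i * ‖iteratedDeriv (n - i) (φ : ℝ → ℂ) x‖
          ≤ t⁻¹ ^ i * (M * (t * 2) ^ (N + 1 - n + i)) := by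
            refine mul_le_mul_of_nonneg_left (h1.trans ?_) (by positivity)
            gcongr
        _ = M * 2 ^ (N + 1 - n + i) * t ^ (N + 1 - n) := by
            rw [mul_pow, pow_add t, inv_pow]
            field_simp
        _ ≤ M * 2 ^ (N + 1 - n + i) * t := by
            gcongr
            exact pow_le_of_le_one ht.le ht1 (by omega)

/-- Evaluation of the `k`-th derivative at the origin, as a linear functional. -/
noncomputable def dsaEval (k : ℕ) : SchwartzMap ℝ ℂ →ₗ[ℂ] ℂ where
  toFun φ := iteratedDeriv k (φ : ℝ → ℂ) 0
  map_add' f g := by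
    rw [FunLike.coe_add, iteratedDeriv_add (f.smooth k).contDiffAt (g.smooth k).contDiffAt]
  map_smul' c f := by
    rw [FunLike.coe_smul, iteratedDeriv_const_smul_field]; rfl

/-- A tempered distribution on `ℝ` supported at the origin is a finite linear
combination of derivatives of the Dirac delta at `0`: there are coefficients
`c 0, …, c m` with `α(φ) = ∑_{k ≤ m} c k · φ^{(k)}(0)` for all Schwartz `φ`. -/
theorem tempered_distribution_supported_at_origin
    (α : SchwartzMap ℝ ℂ →L[ℂ] ℂ) (h : DistSupport α ⊆ {0}) :
    ∃ (m : ℕ) (c : ℕ → ℂ), ∀ φ : SchwartzMap ℝ ℂ,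
      α φ = ∑ k ∈ Finset.range (m + 1), c k * ((-1 : ℂ) ^ k * iteratedDeriv k (φ : ℝ → ℂ) 0) := by
  obtain ⟨N, hN⟩ := dsa_flat α h
  have hmem : α.toLinearMap ∈ Submodule.span ℂ
      (Set.range fun k : Fin (N + 1) => dsaEval k) := by
    apply mem_span_of_iInf_ker_le_ker
    intro φ hφ
    simp only [Submodule.mem_iInf, LinearMap.mem_ker] at hφ ⊢
    exact hN φ fun j hj => hφ ⟨j, by omega⟩
  rw [Submodule.mem_span_range_iff_exists_fun] at hmem
  obtain ⟨c, hc⟩ := hmem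
  refine ⟨N, fun k => if hk : k < N + 1 then (-1) ^ k * c ⟨k, hk⟩ else 0, fun φ => ?_⟩
  have h1 : α φ = ∑ i : Fin (N + 1), c i * iteratedDeriv i (φ : ℝ → ℂ) 0 := by
    have := congrArg (fun L => L φ) hc
    simp only [LinearMap.sum_apply, LinearMap.smul_apply, smul_eq_mul] at this
    exact this.symm
  rw [h1, Finset.sum_range]
  refine Finset.sum_congr rfl fun i _ => ?_
  have h2 : ((-1 : ℂ) ^ (i : ℕ)) * (-1) ^ (i : ℕ) = 1 := by
    rw [← mul_pow]; simp
  simp only [i.2, dif_pos, Fin.eta]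
  linear_combination (-(c i * iteratedDeriv i (φ : ℝ → ℂ) 0)) * h2
end

section
/- The space J_0(ℝ) of smooth compactly supported functions on ℝ that vanish on a neighborhood of ℤ is dense in the space I_0(ℝ) of Schwartz functions vanishing to infinite order at every integer, with respect to the Schwartz space topology. -/
/-- The space `I₀(ℝ)` of Schwartz functions vanishing to infinite order at every integer. -/
def I0 : Set (SchwartzMap ℝ ℂ) :=
  {f : SchwartzMap ℝ ℂ | ∀ (n : ℤ) (j : ℕ), iteratedDeriv j (f : ℝ → ℂ) (n : ℝ) = 0}

/-- The space `J₀(ℝ)` of smooth compactly supported functions vanishing in a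
neighborhood of `ℤ`, viewed inside the Schwartz space. -/
def J0 : Set (SchwartzMap ℝ ℂ) :=
  {f : SchwartzMap ℝ ℂ | HasCompactSupport (f : ℝ → ℂ) ∧
    ∃ ε > 0, ∀ x : ℝ, (∃ n : ℤ, |x - (n : ℝ)| < ε) → f x = 0}

open Filter Topology

/-- Approximation criterion. -/
lemma approx_aux (f : SchwartzMap ℝ ℂ) (u : ℕ → ℝ → ℝ) (hu : ∀ N, (u N).HasTemperateGrowth)
    (h : ∀ k i j : ℕ, ∃ C : ℝ, ∀ (N : ℕ) (x : ℝ),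
      ‖x‖ ^ k * (‖iteratedFDeriv ℝ i (u N) x‖ * ‖iteratedFDeriv ℝ j (f : ℝ → ℂ) x‖)
        ≤ C / ((N : ℝ) + 1))
    (S : Set (SchwartzMap ℝ ℂ))
    (hS : ∀ N, f - SchwartzMap.smulLeftCLM ℂ (u N) f ∈ S) : f ∈ closure S := by
  refine mem_closure_of_tendsto (f := fun N : ℕ => f - SchwartzMap.smulLeftCLM ℂ (u N) f)
    (b := atTop) ?_ (Eventually.of_forall hS)
  rw [(schwartz_withSeminorms ℝ ℝ ℂ).tendsto_nhds]
  rintro ⟨k, n⟩ ε hε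
  choose C hC using h
  set K : ℝ := ∑ i ∈ Finset.range (n + 1), (n.choose i : ℝ) * C k i (n - i) with hK
  have hbound : ∀ N : ℕ, SchwartzMap.seminorm ℝ k n (SchwartzMap.smulLeftCLM ℂ (u N) f)
      ≤ |K| / ((N : ℝ) + 1) := by
    intro N
    refine SchwartzMap.seminorm_le_bound ℝ k n _ (by positivity) ?_
    intro x
    rw [SchwartzMap.smulLeftCLM_apply (hu N)]
    have h1 := norm_iteratedFDeriv_smul_le (𝕜 := ℝ) (hu N).1 (f.smooth ⊤) x (n := n)
      (by exact_mod_cast le_top)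
    have h2 : ‖x‖ ^ k * ‖iteratedFDeriv ℝ n (fun y => u N y • f y) x‖ ≤ K / ((N : ℝ) + 1) := by
      refine (mul_le_mul_of_nonneg_left h1 (by positivity)).trans ?_
      rw [hK, Finset.mul_sum, Finset.sum_div]
      refine Finset.sum_le_sum fun i _ => ?_
      have := mul_le_mul_of_nonneg_left (hC k i (n - i) N x)
        (Nat.cast_nonneg (α := ℝ) (n.choose i))
      calc _ = (n.choose i : ℝ) * (‖x‖ ^ k * (‖iteratedFDeriv ℝ i (u N) x‖ *
            ‖iteratedFDeriv ℝ (n - i) (f : ℝ → ℂ) x‖)) := by ring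
        _ ≤ _ := this
        _ = _ := by ring
    refine h2.trans ?_
    gcongr
    exact le_abs_self K
  have hlim : Tendsto (fun N : ℕ => |K| / ((N : ℝ) + 1)) atTop (𝓝 0) :=
    by
    have := (tendsto_one_div_add_atTop_nhds_zero_nat (𝕜 := ℝ)).const_mul |K|
    simpa [div_eq_mul_inv] using this
  filter_upwards [hlim.eventually (gt_mem_nhds hε)] with N hN
  have : f - SchwartzMap.smulLeftCLM ℂ (u N) f - f = - SchwartzMap.smulLeftCLM ℂ (u N) f := by
    abel
  rw [this, map_neg_eq_map]
  exact (hbound N).trans_lt hN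

/-- The basic bump function. -/
noncomputable def bmp : ContDiffBump (0 : ℝ) := ⟨1, 2, by norm_num, by norm_num⟩

lemma bmp_one {t : ℝ} (h : |t| ≤ 1) : bmp t = 1 :=
  bmp.one_of_mem_closedBall (by simpa [bmp] using h)

lemma bmp_zero {t : ℝ} (h : 2 ≤ |t|) : bmp t = 0 :=
  bmp.zero_of_le_dist (by simpa [bmp] using h)

lemma bmp_bound (n : ℕ) : ∃ C : ℝ, 0 ≤ C ∧ ∀ i ≤ n, ∀ x, ‖iteratedFDeriv ℝ i bmp x‖ ≤ C := by
  have h : ∀ i : ℕ, ∃ C : ℝ, ∀ x, ‖iteratedFDeriv ℝ i bmp x‖ ≤ C := by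
    intro i
    obtain ⟨C, hC⟩ := (HasCompactSupport.toSchwartzMap bmp.hasCompactSupport bmp.contDiff).decay' 0 i
    exact ⟨C, fun x => by
      have h := hC x
      rw [pow_zero, one_mul] at h
      exact h⟩
  choose C hC using h
  have h0 : ∀ i, 0 ≤ C i := fun i => (norm_nonneg _).trans (hC i 0)
  refine ⟨∑ i ∈ Finset.range (n + 1), C i, Finset.sum_nonneg fun i _ => h0 i, fun i hi x => ?_⟩
  exact (hC i x).trans (Finset.single_le_sum (f := C) (fun i _ => h0 i)
    (Finset.mem_range.2 (by omega)))

/-- Cutoff near the integers. -/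
noncomputable def uu (N : ℕ) (x : ℝ) : ℝ := bmp (((N : ℝ) + 1) * Real.sin (Real.pi * x))

lemma uu_smooth (N : ℕ) : ContDiff ℝ ((⊤ : ℕ∞) : WithTop ℕ∞) (uu N) := by
  unfold uu
  exact bmp.contDiff.comp (by fun_prop)

lemma uu_bound (n : ℕ) : ∃ C : ℝ, 0 ≤ C ∧ ∀ (N : ℕ) (x : ℝ),
    ‖iteratedFDeriv ℝ n (uu N) x‖ ≤ C * ((N : ℝ) + 1) ^ n := by
  obtain ⟨C, hC0, hC⟩ := bmp_bound n
  refine ⟨n.factorial * C * Real.pi ^ n, by positivity, fun N x => ?_⟩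
  have hs : ContDiff ℝ n (fun x : ℝ => ((N : ℝ) + 1) * Real.sin (Real.pi * x)) := by fun_prop
  have := norm_iteratedFDeriv_comp_le (𝕜 := ℝ) (g := bmp)
    (f := fun x : ℝ => ((N : ℝ) + 1) * Real.sin (Real.pi * x)) (n := n) (N := n)
    bmp.contDiff hs le_rfl x (C := C) (D := ((N : ℝ) + 1) * Real.pi)
    (fun i hi => hC i hi _) ?_
  · refine this.trans (le_of_eq ?_)
    rw [mul_pow]; ring
  · intro i hi _
    rw [norm_iteratedFDeriv_eq_norm_iteratedDeriv, iteratedDeriv_const_mul_field,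
      iteratedDeriv_comp_const_mul Real.contDiff_sin]
    rw [norm_mul, norm_mul, norm_pow, mul_pow]
    have h1 : ‖(N : ℝ) + 1‖ = (N : ℝ) + 1 := Real.norm_of_nonneg (by positivity)
    have h2 : ‖Real.pi‖ = Real.pi := Real.norm_of_nonneg Real.pi_pos.le
    have h3 := Real.abs_iteratedDeriv_sin_le_one i (Real.pi * x)
    rw [h1, h2]
    have h4 : (N : ℝ) + 1 ≤ ((N : ℝ) + 1) ^ i :=
      le_self_pow₀ (by linarith [Nat.cast_nonneg (α := ℝ) N]) (by omega)
    have h5 : 0 ≤ Real.pi ^ i := by positivity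
    calc _ ≤ ((N : ℝ) + 1) ^ i * (Real.pi ^ i * 1) := by
          gcongr
          exact h3
      _ = _ := by ring

lemma abs_sin_int (x : ℝ) (n : ℤ) : |Real.sin (Real.pi * x)| = |Real.sin (Real.pi * (x - n))| := by
  have := Real.sin_sub_int_mul_pi (Real.pi * x) n
  rw [show Real.pi * (x - n) = Real.pi * x - n * Real.pi by ring, this, abs_mul]
  simp [abs_zpow]

lemma uu_deriv_zero (n N : ℕ) (x : ℝ) (hx : 1 / ((N : ℝ) + 1) < |x - round x|) :
    iteratedFDeriv ℝ n (uu N) x = 0 := by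
  have hN : (0 : ℝ) < (N : ℝ) + 1 := by positivity
  have hr := abs_sub_round x
  have h1 : 2 < |((N : ℝ) + 1) * Real.sin (Real.pi * x)| := by
    rw [abs_mul, abs_of_pos hN, abs_sin_int x (round x)]
    have h2 : 2 / Real.pi * |Real.pi * (x - round x)| ≤ _ := Real.mul_abs_le_abs_sin (by
      rw [abs_mul, abs_of_pos Real.pi_pos]; nlinarith [Real.pi_pos])
    rw [abs_mul, abs_of_pos Real.pi_pos] at h2
    have h3 : 2 / Real.pi * (Real.pi * |x - round x|) = 2 * |x - round x| := by
      field_simp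
    rw [h3] at h2
    rw [div_lt_iff₀ hN] at hx
    nlinarith
  have hev : uu N =ᶠ[𝓝 x] fun _ => (0 : ℝ) := by
    have hc : Continuous fun x : ℝ => |((N : ℝ) + 1) * Real.sin (Real.pi * x)| := by fun_prop
    filter_upwards [hc.continuousAt.eventually (lt_mem_nhds h1)] with y hy
    exact bmp_zero hy.le
  have := (hev.iteratedFDeriv ℝ n).eq_of_nhds
  rw [this]
  simp

/-- Flatness at the integers. -/
lemma flat (f : SchwartzMap ℝ ℂ) (hf : f ∈ I0) (k m : ℕ) : ∀ i : ℕ, ∃ C : ℝ, 0 ≤ C ∧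
    ∀ (n : ℤ) (x : ℝ), |x - n| ≤ 1 →
      (1 + |x|) ^ k * ‖iteratedDeriv i (f : ℝ → ℂ) x‖ ≤ C * |x - n| ^ m := by
  induction m with
  | zero =>
    intro i
    refine ⟨2 ^ k * ((Finset.Iic (k, i)).sup fun m => SchwartzMap.seminorm ℝ m.1 m.2) f,
      mul_nonneg (by positivity) (apply_nonneg _ _), fun n x _ => ?_⟩
    · have := SchwartzMap.one_add_le_sup_seminorm_apply (𝕜 := ℝ) (m := (k, i)) le_rfl le_rfl f x
      rw [norm_iteratedFDeriv_eq_norm_iteratedDeriv, Real.norm_eq_abs] at this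
      simpa using this
  | succ m ih =>
    intro i
    obtain ⟨C, hC0, hC⟩ := ih (i + 1)
    refine ⟨2 ^ k * C, by positivity, fun n x hx => ?_⟩
    have hx0 : 0 < (1 + |x|) ^ k := by positivity
    have key := Convex.norm_image_sub_le_of_norm_deriv_le (𝕜 := ℝ)
      (f := iteratedDeriv i (f : ℝ → ℂ)) (s := segment ℝ (n : ℝ) x) (x := (n : ℝ)) (y := x)
      (C := 2 ^ k * C * |x - n| ^ m / (1 + |x|) ^ k)
      (fun y _ => ((f.smooth ⊤).differentiable_iteratedDeriv i
        (by exact_mod_cast ENat.natCast_lt_top i)).differentiableAt) ?_ (convex_segment _ _)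
      (left_mem_segment _ _ _) (right_mem_segment _ _ _)
    · rw [hf n i, sub_zero, Real.norm_eq_abs] at key
      calc _ ≤ (1 + |x|) ^ k * (2 ^ k * C * |x - n| ^ m / (1 + |x|) ^ k * |x - n|) := by gcongr
        _ = _ := by
          field_simp
          ring
    · intro y hy
      have hy1 : |y - n| ≤ |x - n| := by
        have := norm_sub_le_of_mem_segment hy
        simpa [Real.norm_eq_abs, abs_sub_comm] using this
      rw [← iteratedDeriv_succ, le_div_iff₀ hx0]
      have hxy : 1 + |x| ≤ 2 * (1 + |y|) := by
        have h1 : |x - y| ≤ |x - n| := by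
          have := norm_sub_le_of_mem_segment (segment_symm ℝ (n : ℝ) x ▸ hy)
          simpa [Real.norm_eq_abs, abs_sub_comm] using this
        have h2 : |x| ≤ |x - y| + |y| := by simpa using abs_add_le (x - y) y
        linarith [abs_nonneg y]
      calc _ ≤ ‖iteratedDeriv (i + 1) (f : ℝ → ℂ) y‖ * (2 * (1 + |y|)) ^ k := by gcongr
        _ = 2 ^ k * ((1 + |y|) ^ k * ‖iteratedDeriv (i + 1) (f : ℝ → ℂ) y‖) := by
          rw [mul_pow]; ring
        _ ≤ 2 ^ k * (C * |y - n| ^ m) := by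
          exact mul_le_mul_of_nonneg_left (hC n y (hy1.trans hx)) (by positivity)
        _ ≤ 2 ^ k * (C * |x - n| ^ m) := by gcongr
        _ = _ := by ring

/-- Schwartz functions vanishing near the integers. -/
def J1 : Set (SchwartzMap ℝ ℂ) :=
  {f : SchwartzMap ℝ ℂ | ∃ ε > 0, ∀ x : ℝ, (∃ n : ℤ, |x - (n : ℝ)| < ε) → f x = 0}

lemma uu_temperate (N : ℕ) : (uu N).HasTemperateGrowth := by
  refine ⟨uu_smooth N, fun n => ?_⟩
  obtain ⟨C, -, hC⟩ := uu_bound n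
  exact ⟨0, C * ((N : ℝ) + 1) ^ n, fun x => by simpa using hC N x⟩

lemma step1 : I0 ⊆ closure J1 := by
  intro f hf
  refine approx_aux f uu uu_temperate ?_ _ ?_
  · intro k i j
    obtain ⟨A, hA0, hA⟩ := uu_bound i
    obtain ⟨B, hB0, hB⟩ := flat f hf k (i + 1) j
    refine ⟨A * B, fun N x => ?_⟩
    have hN : (0 : ℝ) < (N : ℝ) + 1 := by positivity
    by_cases hx : 1 / ((N : ℝ) + 1) < |x - round x|
    · rw [uu_deriv_zero i N x hx]
      simp only [norm_zero, zero_mul, mul_zero]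
      positivity
    · push Not at hx
      have h1 := hB (round x) x ((abs_sub_round x).trans (by norm_num))
      have h2 : ‖x‖ ^ k * ‖iteratedFDeriv ℝ j (f : ℝ → ℂ) x‖ ≤ B * (1 / ((N : ℝ) + 1)) ^ (i + 1) := by
        rw [norm_iteratedFDeriv_eq_norm_iteratedDeriv, Real.norm_eq_abs]
        calc _ ≤ (1 + |x|) ^ k * ‖iteratedDeriv j (f : ℝ → ℂ) x‖ := by
              gcongr
              linarith
          _ ≤ _ := h1
          _ ≤ _ := by gcongr
      calc _ = ‖iteratedFDeriv ℝ i (uu N) x‖ * (‖x‖ ^ k * ‖iteratedFDeriv ℝ j (f : ℝ → ℂ) x‖) := by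
            ring
        _ ≤ (A * ((N : ℝ) + 1) ^ i) * (B * (1 / ((N : ℝ) + 1)) ^ (i + 1)) := by
            gcongr
            exact hA N x
        _ = _ := by
            rw [div_pow, one_pow, pow_succ]
            field_simp
  · intro N
    have hN : (0 : ℝ) < (N : ℝ) + 1 := by positivity
    refine ⟨1 / (((N : ℝ) + 1) * Real.pi), by positivity, ?_⟩
    rintro x ⟨n, hn⟩
    have h1 : uu N x = 1 := by
      refine bmp_one ?_
      rw [abs_mul, abs_of_pos hN, abs_sin_int x n]
      have h2 : |Real.sin (Real.pi * (x - n))| ≤ |Real.pi * (x - n)| := Real.abs_sin_le_abs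
      rw [abs_mul, abs_of_pos Real.pi_pos] at h2
      rw [lt_div_iff₀ (by positivity)] at hn
      nlinarith
    rw [sub_apply, SchwartzMap.smulLeftCLM_apply_apply (uu_temperate N), h1]
    simp

/-- Cutoff near infinity. -/
noncomputable def vv (N : ℕ) (x : ℝ) : ℝ := 1 - bmp (((N : ℝ) + 1)⁻¹ * x)

lemma vv_smooth (N : ℕ) : ContDiff ℝ ((⊤ : ℕ∞) : WithTop ℕ∞) (vv N) := by
  unfold vv
  exact contDiff_const.sub (bmp.contDiff.comp (by fun_prop))

lemma vv_bound (n : ℕ) : ∃ C : ℝ, 0 ≤ C ∧ ∀ (N : ℕ) (x : ℝ),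
    ‖iteratedFDeriv ℝ n (vv N) x‖ ≤ C := by
  obtain ⟨C, hC0, hC⟩ := bmp_bound n
  refine ⟨1 + C, by positivity, fun N x => ?_⟩
  have hb : ContDiff ℝ n (fun x : ℝ => bmp (((N : ℝ) + 1)⁻¹ * x)) :=
    bmp.contDiff.comp (by fun_prop)
  have h1 : ‖iteratedDeriv n (fun x : ℝ => bmp (((N : ℝ) + 1)⁻¹ * x)) x‖ ≤ C := by
    rw [iteratedDeriv_comp_const_mul bmp.contDiff, norm_mul]
    have h2 := hC n le_rfl (((N : ℝ) + 1)⁻¹ * x)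
    rw [norm_iteratedFDeriv_eq_norm_iteratedDeriv] at h2
    have h3 : ‖(((N : ℝ) + 1)⁻¹) ^ n‖ ≤ 1 := by
      rw [norm_pow]
      refine pow_le_one₀ (norm_nonneg _) ?_
      rw [Real.norm_of_nonneg (by positivity)]
      exact inv_le_one_of_one_le₀ (by linarith [Nat.cast_nonneg (α := ℝ) N])
    calc _ ≤ 1 * C := by gcongr
      _ = C := one_mul C
  rw [norm_iteratedFDeriv_eq_norm_iteratedDeriv]
  have h4 : iteratedDeriv n (vv N) x = iteratedDeriv n (fun _ : ℝ => (1 : ℝ)) x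
      - iteratedDeriv n (fun x : ℝ => bmp (((N : ℝ) + 1)⁻¹ * x)) x :=
    iteratedDeriv_fun_sub contDiffAt_const hb.contDiffAt
  rw [h4]
  refine (norm_sub_le _ _).trans (add_le_add ?_ h1)
  rw [iteratedDeriv_const]
  split_ifs <;> simp

lemma vv_temperate (N : ℕ) : (vv N).HasTemperateGrowth := by
  refine ⟨vv_smooth N, fun n => ?_⟩
  obtain ⟨C, -, hC⟩ := vv_bound n
  exact ⟨0, C, fun x => by simpa using hC N x⟩

lemma vv_deriv_zero (n N : ℕ) (x : ℝ) (hx : |x| < (N : ℝ) + 1) :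
    iteratedFDeriv ℝ n (vv N) x = 0 := by
  have hN : (0 : ℝ) < (N : ℝ) + 1 := by positivity
  have hev : vv N =ᶠ[𝓝 x] fun _ => (0 : ℝ) := by
    filter_upwards [continuous_abs.continuousAt.eventually (gt_mem_nhds hx)] with y hy
    unfold vv
    rw [bmp_one, sub_self]
    rw [abs_mul, abs_of_pos (inv_pos.2 hN), inv_mul_le_iff₀ hN]
    linarith
  rw [(hev.iteratedFDeriv ℝ n).eq_of_nhds]
  simp

lemma step2 : J1 ⊆ closure J0 := by
  intro f hf
  refine approx_aux f vv vv_temperate ?_ _ ?_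
  · intro k i j
    obtain ⟨A, hA0, hA⟩ := vv_bound i
    refine ⟨A * SchwartzMap.seminorm ℝ (k + 1) j f, fun N x => ?_⟩
    have hN : (0 : ℝ) < (N : ℝ) + 1 := by positivity
    by_cases hx : |x| < (N : ℝ) + 1
    · rw [vv_deriv_zero i N x hx]
      simp only [norm_zero, zero_mul, mul_zero]
      positivity
    · push Not at hx
      have h1 := SchwartzMap.le_seminorm ℝ (k + 1) j f x
      rw [le_div_iff₀ hN]
      calc _ = ‖iteratedFDeriv ℝ i (vv N) x‖ *
            (‖x‖ ^ k * ((N : ℝ) + 1) * ‖iteratedFDeriv ℝ j (f : ℝ → ℂ) x‖) := by ring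
        _ ≤ A * (‖x‖ ^ k * ‖x‖ * ‖iteratedFDeriv ℝ j (f : ℝ → ℂ) x‖) := by
            gcongr
            · exact hA N x
            · exact hx
        _ ≤ _ := by
            rw [← pow_succ]
            gcongr
  · intro N
    have hN : (0 : ℝ) < (N : ℝ) + 1 := by positivity
    have happ : ∀ x, (f - SchwartzMap.smulLeftCLM ℂ (vv N) f) x = f x - vv N x • f x := by
      intro x
      rw [sub_apply, SchwartzMap.smulLeftCLM_apply_apply (vv_temperate N)]
    refine ⟨?_, ?_⟩
    · refine HasCompactSupport.intro (isCompact_closedBall (0 : ℝ) (2 * ((N : ℝ) + 1))) ?_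
      intro x hx
      have hx' : 2 * ((N : ℝ) + 1) < |x| := by simpa using hx
      have h1 : vv N x = 1 := by
        unfold vv
        rw [bmp_zero, sub_zero]
        rw [abs_mul, abs_of_pos (inv_pos.2 hN), le_inv_mul_iff₀ hN]
        linarith
      rw [happ, h1]
      simp
    · obtain ⟨ε, hε, h⟩ := hf
      refine ⟨ε, hε, fun x hx => ?_⟩
      rw [happ, h x hx]
      simp

/-- `J₀(ℝ)` is dense in `I₀(ℝ)` for the Schwartz space topology. -/
theorem J0_dense_in_I0 : I0 ⊆ closure J0 := by
  exact step1.trans (closure_minimal step2 isClosed_closure)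
end
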